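/- arXiv:2406.01351 — 3 statements merged into one kernel-verified Lean document; each statement's English description precedes it below -/
import Mathlib

section
/- Let Ω ⊆ ℝ² be open and let ψ : ℝ² → ℝ be smooth, compactly supported with support contained in Ω, and not identically zero. Define the vector field u = (∂₂ψ, −∂₁ψ). Then: (i) u is smooth, compactly supported in Ω, not identically zero, and div u = ∂₁u₁ + ∂₂u₂ = 0 on ℝ²; (ii) ∫_Ω |u|² dx = ∫_Ω |∇ψ|² dx and this quantity is strictly positive; (iii) ∫_Ω ‖Du‖² dx = ∫_Ω (Δψ)² dx, where ‖Du‖² = Σ_{i,j} (∂ⱼuᵢ)²; consequently (∫_Ω ‖Du‖² dx)/(∫_Ω |u|² dx) = (∫_Ω (Δψ)² dx)/(∫_Ω |∇ψ|² dx). -/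
/-!
The fields `u` and `∇ψ` have the same length pointwise, and `div u = ∂₁∂₂ψ - ∂₂∂₁ψ = 0` by symmetry
of second derivatives. If `∇ψ` vanished identically, `ψ` would be constant, hence zero since it has
compact support in the noncompact plane; so `|u|²` is continuous, nonnegative and not identically
zero, with positive integral.

For the energies, pointwise `‖Du‖² = (∂₁∂₁ψ)² + (∂₂∂₂ψ)² + 2 (∂₁∂₂ψ)²`, which differs from
`(Δψ)²` by `2 (∂₁∂₁ψ · ∂₂∂₂ψ - (∂₁∂₂ψ)²)`. Two integrations by parts (`integral_hessian`) show that
the Hessian determinant of a compactly supported function integrates to zero. All integrands are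
supported in `tsupport ψ ⊆ Ω`, so integrals over `Ω` agree with integrals over the plane.
-/

open MeasureTheory

/-- First partial derivative (with respect to the first coordinate of `ℝ × ℝ`). -/
noncomputable def pd1 (f : ℝ × ℝ → ℝ) : ℝ × ℝ → ℝ := fun x => fderiv ℝ f x (1, 0)

/-- Second partial derivative (with respect to the second coordinate of `ℝ × ℝ`). -/
noncomputable def pd2 (f : ℝ × ℝ → ℝ) : ℝ × ℝ → ℝ := fun x => fderiv ℝ f x (0, 1)

/-- The Laplacian on `ℝ × ℝ`. -/
noncomputable def lap (f : ℝ × ℝ → ℝ) : ℝ × ℝ → ℝ := fun x => pd1 (pd1 f) x + pd2 (pd2 f) x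

lemma contDiff_pd1 {f : ℝ × ℝ → ℝ} (hf : ContDiff ℝ (⊤ : ℕ∞) f) :
    ContDiff ℝ (⊤ : ℕ∞) (pd1 f) :=
  (hf.fderiv_right (m := (⊤ : ℕ∞)) (by simp)).clm_apply contDiff_const

lemma contDiff_pd2 {f : ℝ × ℝ → ℝ} (hf : ContDiff ℝ (⊤ : ℕ∞) f) :
    ContDiff ℝ (⊤ : ℕ∞) (pd2 f) :=
  (hf.fderiv_right (m := (⊤ : ℕ∞)) (by simp)).clm_apply contDiff_const

lemma tsupport_pd1_subset (f : ℝ × ℝ → ℝ) : tsupport (pd1 f) ⊆ tsupport f :=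
  tsupport_fderiv_apply_subset ℝ (1, 0)

lemma tsupport_pd2_subset (f : ℝ × ℝ → ℝ) : tsupport (pd2 f) ⊆ tsupport f :=
  tsupport_fderiv_apply_subset ℝ (0, 1)

lemma hasCompactSupport_pd1 {f : ℝ × ℝ → ℝ} (hf : HasCompactSupport f) :
    HasCompactSupport (pd1 f) :=
  hf.of_isClosed_subset (isClosed_tsupport _) (tsupport_pd1_subset f)

lemma hasCompactSupport_pd2 {f : ℝ × ℝ → ℝ} (hf : HasCompactSupport f) :
    HasCompactSupport (pd2 f) :=
  hf.of_isClosed_subset (isClosed_tsupport _) (tsupport_pd2_subset f)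

lemma pd1_pd2_comm {f : ℝ × ℝ → ℝ} (hf : ContDiff ℝ (⊤ : ℕ∞) f) (x : ℝ × ℝ) :
    pd1 (pd2 f) x = pd2 (pd1 f) x := by
  have hd : DifferentiableAt ℝ (fderiv ℝ f) x :=
    ((hf.fderiv_right (m := (⊤ : ℕ∞)) (by simp)).differentiable (by simp)) x
  have hs : IsSymmSndFDerivAt ℝ f x := hf.contDiffAt.isSymmSndFDerivAt (by
    simpa using WithTop.coe_le_coe.mpr (le_top : (2 : ℕ∞) ≤ ⊤))
  unfold pd1 pd2
  rw [fderiv_clm_apply hd (differentiableAt_const _), fderiv_clm_apply hd (differentiableAt_const _)]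
  simpa using hs.eq (1, 0) (0, 1)

lemma pd1_neg (f : ℝ × ℝ → ℝ) (x : ℝ × ℝ) : pd1 (fun y => -f y) x = -pd1 f x := by
  simp [pd1, fderiv_fun_neg]

lemma pd2_neg (f : ℝ × ℝ → ℝ) (x : ℝ × ℝ) : pd2 (fun y => -f y) x = -pd2 f x := by
  simp [pd2, fderiv_fun_neg]

lemma integrable_mul {f g : ℝ × ℝ → ℝ} (hf : ContDiff ℝ (⊤ : ℕ∞) f)
    (hg : ContDiff ℝ (⊤ : ℕ∞) g) (hfc : HasCompactSupport f) :
    Integrable (fun x => f x * g x) :=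
  (hf.continuous.mul hg.continuous).integrable_of_hasCompactSupport hfc.mul_right

lemma integral_mul_pd1 {f g : ℝ × ℝ → ℝ} (hf : ContDiff ℝ (⊤ : ℕ∞) f)
    (hg : ContDiff ℝ (⊤ : ℕ∞) g) (hfc : HasCompactSupport f) :
    ∫ x, f x * pd1 g x = -∫ x, pd1 f x * g x :=
  integral_mul_fderiv_eq_neg_fderiv_mul_of_integrable
    (integrable_mul (contDiff_pd1 hf) hg (hasCompactSupport_pd1 hfc))
    (integrable_mul hf (contDiff_pd1 hg) hfc) (integrable_mul hf hg hfc)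
    (fun x _ => hf.differentiable (by simp) x) (fun x _ => hg.differentiable (by simp) x)

lemma integral_mul_pd2 {f g : ℝ × ℝ → ℝ} (hf : ContDiff ℝ (⊤ : ℕ∞) f)
    (hg : ContDiff ℝ (⊤ : ℕ∞) g) (hfc : HasCompactSupport f) :
    ∫ x, f x * pd2 g x = -∫ x, pd2 f x * g x :=
  integral_mul_fderiv_eq_neg_fderiv_mul_of_integrable
    (integrable_mul (contDiff_pd2 hf) hg (hasCompactSupport_pd2 hfc))
    (integrable_mul hf (contDiff_pd2 hg) hfc) (integrable_mul hf hg hfc)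
    (fun x _ => hf.differentiable (by simp) x) (fun x _ => hg.differentiable (by simp) x)

/-- The Hessian determinant of a compactly supported function has integral zero. -/
lemma integral_hessian {f : ℝ × ℝ → ℝ} (hf : ContDiff ℝ (⊤ : ℕ∞) f) (hfc : HasCompactSupport f) :
    ∫ x, pd1 (pd1 f) x * pd2 (pd2 f) x = ∫ x, pd2 (pd1 f) x * pd2 (pd1 f) x := by
  have h1 := contDiff_pd1 hf
  have h2 := contDiff_pd2 hf
  have c1 := hasCompactSupport_pd1 hfc
  have e1 := integral_mul_pd1 h1 (contDiff_pd2 h2) c1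
  have e2 := integral_mul_pd2 h1 (contDiff_pd1 h2) c1
  simp only [pd1_pd2_comm h2] at e1
  simp only [pd1_pd2_comm hf] at e2
  linarith

lemma eq_zero_of_pd_eq_zero {f : ℝ × ℝ → ℝ} (hf : ContDiff ℝ (⊤ : ℕ∞) f)
    (hfc : HasCompactSupport f) (h1 : ∀ x, pd1 f x = 0) (h2 : ∀ x, pd2 f x = 0) : f = 0 := by
  have hd : ∀ x, fderiv ℝ f x = 0 := fun x => by
    ext
    · simpa [pd1] using h1 x
    · simpa [pd2] using h2 x
  have hconst := is_const_of_fderiv_eq_zero (hf.differentiable (by simp)) hd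
  obtain ⟨y, hy⟩ : ∃ y, y ∉ tsupport f := by
    by_contra! h
    exact noncompact_univ (ℝ × ℝ) (by
      rw [← Set.eq_univ_of_forall h]
      exact hfc)
  ext x
  rw [hconst x y, image_eq_zero_of_notMem_tsupport hy, Pi.zero_apply]

theorem stmt2 (Ω : Set (ℝ × ℝ)) (hΩ : IsOpen Ω)
    (ψ : ℝ × ℝ → ℝ) (hψ : ContDiff ℝ (⊤ : ℕ∞) ψ) (hsupp : HasCompactSupport ψ)
    (hsub : tsupport ψ ⊆ Ω) (hne : ψ ≠ 0)
    (u : ℝ × ℝ → ℝ × ℝ) (hu : u = fun x => (pd2 ψ x, - pd1 ψ x)) :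
    -- (i) regularity, support, nontriviality, and the divergence-free condition
    (ContDiff ℝ (⊤ : ℕ∞) u ∧ HasCompactSupport u ∧ tsupport u ⊆ Ω ∧ u ≠ 0 ∧
      ∀ x : ℝ × ℝ, pd1 (fun y => (u y).1) x + pd2 (fun y => (u y).2) x = 0) ∧
    -- (ii) equality of the L² norms, and positivity
    ((∫ x in Ω, ((u x).1 ^ 2 + (u x).2 ^ 2)) =
        ∫ x in Ω, ((pd1 ψ x) ^ 2 + (pd2 ψ x) ^ 2)) ∧
    (0 < ∫ x in Ω, ((u x).1 ^ 2 + (u x).2 ^ 2)) ∧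
    -- (iii) equality of the Dirichlet energies and of the Rayleigh quotients
    ((∫ x in Ω,
        ((pd1 (fun y => (u y).1) x) ^ 2 + (pd2 (fun y => (u y).1) x) ^ 2 +
          (pd1 (fun y => (u y).2) x) ^ 2 + (pd2 (fun y => (u y).2) x) ^ 2)) =
      ∫ x in Ω, (lap ψ x) ^ 2) ∧
    ((∫ x in Ω,
        ((pd1 (fun y => (u y).1) x) ^ 2 + (pd2 (fun y => (u y).1) x) ^ 2 +
          (pd1 (fun y => (u y).2) x) ^ 2 + (pd2 (fun y => (u y).2) x) ^ 2)) /
        (∫ x in Ω, ((u x).1 ^ 2 + (u x).2 ^ 2)) =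
      (∫ x in Ω, (lap ψ x) ^ 2) / (∫ x in Ω, ((pd1 ψ x) ^ 2 + (pd2 ψ x) ^ 2))) := by
  have h1 := contDiff_pd1 hψ
  have h2 := contDiff_pd2 hψ
  have c1 := hasCompactSupport_pd1 hsupp
  have c2 := hasCompactSupport_pd2 hsupp
  have hu1 : (fun y => (u y).1) = pd2 ψ := by rw [hu]
  have hu2 : (fun y => (u y).2) = fun y => -pd1 ψ y := by rw [hu]
  have hsuppu : tsupport u ⊆ tsupport ψ := by
    refine closure_minimal (fun x hx => ?_) (isClosed_tsupport ψ)
    by_contra hn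
    refine hx ?_
    rw [hu]
    simp [image_eq_zero_of_notMem_tsupport (fun h => hn (tsupport_pd1_subset ψ h)),
      image_eq_zero_of_notMem_tsupport (fun h => hn (tsupport_pd2_subset ψ h))]
  have hu0 : u ≠ 0 := by
    intro h0
    refine hne (eq_zero_of_pd_eq_zero hψ hsupp (fun x => ?_) (fun x => ?_))
    · have := congrArg Prod.snd (congrFun h0 x)
      simpa [hu] using this
    · have := congrArg Prod.fst (congrFun h0 x)
      simpa [hu] using this
  have huc : ContDiff ℝ (⊤ : ℕ∞) u := by
    rw [hu]
    exact h2.prodMk h1.neg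
  have hucs : HasCompactSupport u := hsupp.of_isClosed_subset (isClosed_tsupport _) hsuppu
  have hnorm : (∫ x in Ω, ((u x).1 ^ 2 + (u x).2 ^ 2)) =
      ∫ x in Ω, ((pd1 ψ x) ^ 2 + (pd2 ψ x) ^ 2) := by
    congr 1
    ext x
    rw [hu]
    ring
  have hpos : 0 < ∫ x in Ω, ((u x).1 ^ 2 + (u x).2 ^ 2) := by
    rw [setIntegral_eq_integral_of_forall_compl_eq_zero (fun x hx => by
      simp [image_eq_zero_of_notMem_tsupport (fun h => hx (hsub (hsuppu h)))])]
    have hcont : Continuous fun x => (u x).1 ^ 2 + (u x).2 ^ 2 := by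
      have := huc.continuous
      fun_prop
    obtain ⟨x, hx⟩ := Function.ne_iff.mp hu0
    refine hcont.integral_pos_of_hasCompactSupport_nonneg_nonzero (x := x)
      (hucs.comp_left (g := fun p : ℝ × ℝ => p.1 ^ 2 + p.2 ^ 2) (by simp))
      (fun x => by positivity) (fun h => hx ?_)
    ext
    · simpa using (by nlinarith [sq_nonneg (u x).1, sq_nonneg (u x).2] : (u x).1 ^ 2 = 0)
    · simpa using (by nlinarith [sq_nonneg (u x).1, sq_nonneg (u x).2] : (u x).2 ^ 2 = 0)
  have hen : (∫ x in Ω,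
        ((pd1 (fun y => (u y).1) x) ^ 2 + (pd2 (fun y => (u y).1) x) ^ 2 +
          (pd1 (fun y => (u y).2) x) ^ 2 + (pd2 (fun y => (u y).2) x) ^ 2)) =
      ∫ x in Ω, (lap ψ x) ^ 2 := by
    rw [hu1, hu2]
    simp only [pd1_neg, pd2_neg, pd1_pd2_comm hψ]
    -- all second derivatives vanish off `Ω`
    have z11 : ∀ x ∉ Ω, pd1 (pd1 ψ) x = 0 := fun x hx => image_eq_zero_of_notMem_tsupport
      fun h => hx (hsub (tsupport_pd1_subset _ (tsupport_pd1_subset _ h)))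
    have z21 : ∀ x ∉ Ω, pd2 (pd1 ψ) x = 0 := fun x hx => image_eq_zero_of_notMem_tsupport
      fun h => hx (hsub (tsupport_pd1_subset _ (tsupport_pd2_subset _ h)))
    have z22 : ∀ x ∉ Ω, pd2 (pd2 ψ) x = 0 := fun x hx => image_eq_zero_of_notMem_tsupport
      fun h => hx (hsub (tsupport_pd2_subset _ (tsupport_pd2_subset _ h)))
    rw [setIntegral_eq_integral_of_forall_compl_eq_zero
        (fun x hx => by simp [z11 x hx, z21 x hx, z22 x hx]),
      setIntegral_eq_integral_of_forall_compl_eq_zero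
        (fun x hx => by simp [lap, z11 x hx, z22 x hx])]
    have i11 := integrable_mul (contDiff_pd1 h1) (contDiff_pd1 h1) (hasCompactSupport_pd1 c1)
    have i21 := integrable_mul (contDiff_pd2 h1) (contDiff_pd2 h1) (hasCompactSupport_pd2 c1)
    have i22 := integrable_mul (contDiff_pd2 h2) (contDiff_pd2 h2) (hasCompactSupport_pd2 c2)
    have iH := integrable_mul (contDiff_pd1 h1) (contDiff_pd2 h2) (hasCompactSupport_pd1 c1)
    have iS : Integrable fun x => pd1 (pd1 ψ) x * pd1 (pd1 ψ) x + pd2 (pd2 ψ) x * pd2 (pd2 ψ) x :=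
      i11.add i22
    have eL : ∀ x, pd2 (pd1 ψ) x ^ 2 + pd2 (pd2 ψ) x ^ 2 + (-pd1 (pd1 ψ) x) ^ 2 +
        (-pd2 (pd1 ψ) x) ^ 2 = (pd1 (pd1 ψ) x * pd1 (pd1 ψ) x + pd2 (pd2 ψ) x * pd2 (pd2 ψ) x) +
          2 * (pd2 (pd1 ψ) x * pd2 (pd1 ψ) x) := fun x => by ring
    have eR : ∀ x, lap ψ x ^ 2 = (pd1 (pd1 ψ) x * pd1 (pd1 ψ) x +
        pd2 (pd2 ψ) x * pd2 (pd2 ψ) x) + 2 * (pd1 (pd1 ψ) x * pd2 (pd2 ψ) x) := fun x => by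
      unfold lap
      ring
    simp only [eL, eR]
    rw [integral_add iS (i21.const_mul 2), integral_add iS (iH.const_mul 2),
      integral_const_mul, integral_const_mul, integral_hessian hψ hsupp]
  refine ⟨⟨huc, hucs, hsuppu.trans hsub, hu0, fun x => ?_⟩, hnorm, hpos, hen, by rw [hen, hnorm]⟩
  rw [hu1, hu2, pd2_neg, pd1_pd2_comm hψ, add_neg_cancel]
end

section
/- Let Ω ⊆ ℝ² be open, λ ∈ ℝ, let ψ : ℝ² → ℝ and p : ℝ² → ℝ be smooth on Ω, set u = (∂₂ψ, −∂₁ψ), and assume Δu + λu = ∇p on Ω (componentwise). Define h := Δψ + λψ. Then ∂₁p = ∂₂h and ∂₂p = −∂₁h on Ω, and consequently the function F : ℂ → ℂ defined by F(z) = p(Re z, Im z) + i·h(Re z, Im z) is complex-differentiable at every point z with (Re z, Im z) ∈ Ω. -/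
/-!
Partial derivatives of a smooth function commute, so `Δ + λ` commutes with `∂₁` and `∂₂`
(`lap_pd1`, `lap_pd2`). Applied to `u = (∂₂ψ, -∂₁ψ)`, the equation `Δu + λu = ∇p` therefore reads
`∂₁p = ∂₂h`, `∂₂p = -∂₁h`. These are the Cauchy–Riemann equations for `p + i h`, and `p`, `h` are
real differentiable, so `p + i h` is complex differentiable.
-/

open MeasureTheory

lemma contDiffOn_fderiv_apply {Ω : Set (ℝ × ℝ)} (hΩ : IsOpen Ω) {f : ℝ × ℝ → ℝ}
    (hf : ContDiffOn ℝ (⊤ : ℕ∞) f Ω) (v : ℝ × ℝ) :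
    ContDiffOn ℝ (⊤ : ℕ∞) (fun x => fderiv ℝ f x v) Ω :=
  (hf.fderiv_of_isOpen hΩ (m := (⊤ : ℕ∞)) (by simp)).clm_apply contDiffOn_const

lemma contDiffOn_pd1 {Ω : Set (ℝ × ℝ)} (hΩ : IsOpen Ω) {f : ℝ × ℝ → ℝ}
    (hf : ContDiffOn ℝ (⊤ : ℕ∞) f Ω) : ContDiffOn ℝ (⊤ : ℕ∞) (pd1 f) Ω :=
  contDiffOn_fderiv_apply hΩ hf _

lemma contDiffOn_pd2 {Ω : Set (ℝ × ℝ)} (hΩ : IsOpen Ω) {f : ℝ × ℝ → ℝ}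
    (hf : ContDiffOn ℝ (⊤ : ℕ∞) f Ω) : ContDiffOn ℝ (⊤ : ℕ∞) (pd2 f) Ω :=
  contDiffOn_fderiv_apply hΩ hf _

lemma contDiffOn_lap {Ω : Set (ℝ × ℝ)} (hΩ : IsOpen Ω) {f : ℝ × ℝ → ℝ}
    (hf : ContDiffOn ℝ (⊤ : ℕ∞) f Ω) : ContDiffOn ℝ (⊤ : ℕ∞) (lap f) Ω :=
  (contDiffOn_pd1 hΩ (contDiffOn_pd1 hΩ hf)).add (contDiffOn_pd2 hΩ (contDiffOn_pd2 hΩ hf))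

lemma differentiableAt_of_smoothOn {Ω : Set (ℝ × ℝ)} (hΩ : IsOpen Ω) {f : ℝ × ℝ → ℝ}
    (hf : ContDiffOn ℝ (⊤ : ℕ∞) f Ω) {x : ℝ × ℝ} (hx : x ∈ Ω) : DifferentiableAt ℝ f x :=
  (hf.contDiffAt (hΩ.mem_nhds hx)).differentiableAt (by simp)

lemma pd_comm {Ω : Set (ℝ × ℝ)} (hΩ : IsOpen Ω) {f : ℝ × ℝ → ℝ}
    (hf : ContDiffOn ℝ (⊤ : ℕ∞) f Ω) {x : ℝ × ℝ} (hx : x ∈ Ω) :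
    pd1 (pd2 f) x = pd2 (pd1 f) x := by
  have hd : DifferentiableAt ℝ (fderiv ℝ f) x :=
    ((hf.fderiv_of_isOpen hΩ (m := (⊤ : ℕ∞)) (by simp)).contDiffAt
      (hΩ.mem_nhds hx)).differentiableAt (by simp)
  have hs : IsSymmSndFDerivAt ℝ f x :=
    (hf.contDiffAt (hΩ.mem_nhds hx)).isSymmSndFDerivAt
      (by simpa using WithTop.coe_le_coe.2 (le_top (a := (2 : ℕ∞))))
  have key (v w : ℝ × ℝ) :
      fderiv ℝ (fun y => fderiv ℝ f y v) x w = fderiv ℝ (fderiv ℝ f) x w v := by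
    simp [fderiv_clm_apply hd (differentiableAt_const v)]
  change fderiv ℝ (fun y => fderiv ℝ f y (0, 1)) x (1, 0)
    = fderiv ℝ (fun y => fderiv ℝ f y (1, 0)) x (0, 1)
  rw [key, key, hs.eq]

lemma pd1_congr {Ω : Set (ℝ × ℝ)} (hΩ : IsOpen Ω) {f g : ℝ × ℝ → ℝ}
    (hfg : ∀ y ∈ Ω, f y = g y) {x : ℝ × ℝ} (hx : x ∈ Ω) : pd1 f x = pd1 g x := by
  have hev : f =ᶠ[nhds x] g := Filter.eventually_of_mem (hΩ.mem_nhds hx) hfg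
  simp only [pd1, hev.fderiv_eq]

lemma pd2_congr {Ω : Set (ℝ × ℝ)} (hΩ : IsOpen Ω) {f g : ℝ × ℝ → ℝ}
    (hfg : ∀ y ∈ Ω, f y = g y) {x : ℝ × ℝ} (hx : x ∈ Ω) : pd2 f x = pd2 g x := by
  have hev : f =ᶠ[nhds x] g := Filter.eventually_of_mem (hΩ.mem_nhds hx) hfg
  simp only [pd2, hev.fderiv_eq]

lemma fderiv_lap_add {Ω : Set (ℝ × ℝ)} (hΩ : IsOpen Ω) {f : ℝ × ℝ → ℝ}
    (hf : ContDiffOn ℝ (⊤ : ℕ∞) f Ω) (c : ℝ) {x : ℝ × ℝ} (hx : x ∈ Ω) (v : ℝ × ℝ) :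
    fderiv ℝ (fun y => lap f y + c * f y) x v
      = fderiv ℝ (pd1 (pd1 f)) x v + fderiv ℝ (pd2 (pd2 f)) x v + c * fderiv ℝ f x v := by
  have h1 := (differentiableAt_of_smoothOn hΩ
    (contDiffOn_pd1 hΩ (contDiffOn_pd1 hΩ hf)) hx).hasFDerivAt
  have h2 := (differentiableAt_of_smoothOn hΩ
    (contDiffOn_pd2 hΩ (contDiffOn_pd2 hΩ hf)) hx).hasFDerivAt
  have h3 := (differentiableAt_of_smoothOn hΩ hf hx).hasFDerivAt
  have h4 : HasFDerivAt (fun y => lap f y + c * f y) _ x := (h1.add h2).add (h3.const_mul c)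
  rw [h4.fderiv]
  simp

/-- `Δ + c` commutes with `∂₁` on smooth functions. -/
lemma lap_pd1 {Ω : Set (ℝ × ℝ)} (hΩ : IsOpen Ω) {f : ℝ × ℝ → ℝ}
    (hf : ContDiffOn ℝ (⊤ : ℕ∞) f Ω) (c : ℝ) {x : ℝ × ℝ} (hx : x ∈ Ω) :
    lap (pd1 f) x + c * pd1 f x = pd1 (fun y => lap f y + c * f y) x := by
  have e1 : pd2 (pd2 (pd1 f)) x = pd1 (pd2 (pd2 f)) x := by
    rw [pd_comm hΩ (contDiffOn_pd2 hΩ hf) hx]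
    exact pd2_congr hΩ (fun y hy => (pd_comm hΩ hf hy).symm) hx
  have e2 := fderiv_lap_add hΩ hf c hx (1, 0)
  change pd1 _ x = pd1 _ x + pd1 _ x + c * pd1 _ x at e2
  rw [e2, lap, e1]

/-- `Δ + c` commutes with `∂₂` on smooth functions. -/
lemma lap_pd2 {Ω : Set (ℝ × ℝ)} (hΩ : IsOpen Ω) {f : ℝ × ℝ → ℝ}
    (hf : ContDiffOn ℝ (⊤ : ℕ∞) f Ω) (c : ℝ) {x : ℝ × ℝ} (hx : x ∈ Ω) :
    lap (pd2 f) x + c * pd2 f x = pd2 (fun y => lap f y + c * f y) x := by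
  have e1 : pd1 (pd1 (pd2 f)) x = pd2 (pd1 (pd1 f)) x := by
    rw [← pd_comm hΩ (contDiffOn_pd1 hΩ hf) hx]
    exact pd1_congr hΩ (fun y hy => pd_comm hΩ hf hy) hx
  have e2 := fderiv_lap_add hΩ hf c hx (0, 1)
  change pd2 _ x = pd2 _ x + pd2 _ x + c * pd2 _ x at e2
  rw [e2, lap, e1]

-- No smoothness is needed: `fderiv` of a negation is the negation of `fderiv` unconditionally.
lemma lap_neg (f : ℝ × ℝ → ℝ) (x : ℝ × ℝ) : lap (fun y => -f y) x = -lap f x := by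
  have n1 (g : ℝ × ℝ → ℝ) : pd1 (fun y => -g y) = fun y => -pd1 g y := by
    funext y; simp [pd1]
  have n2 (g : ℝ × ℝ → ℝ) : pd2 (fun y => -g y) = fun y => -pd2 g y := by
    funext y; simp [pd2]
  simp only [lap, n1, n2]
  ring

/-- The Cauchy–Riemann equations give complex differentiability of `a + i b`. -/
lemma differentiableAt_complex_of_pd {a b : ℝ × ℝ → ℝ} {z : ℂ}
    (ha : DifferentiableAt ℝ a (z.re, z.im)) (hb : DifferentiableAt ℝ b (z.re, z.im))
    (h1 : pd1 a (z.re, z.im) = pd2 b (z.re, z.im))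
    (h2 : pd2 a (z.re, z.im) = -pd1 b (z.re, z.im)) :
    DifferentiableAt ℂ
      (fun w : ℂ => (a (w.re, w.im) : ℂ) + Complex.I * (b (w.re, w.im) : ℂ)) z := by
  have hE : HasFDerivAt (fun w : ℂ => (w.re, w.im)) (Complex.reCLM.prod Complex.imCLM) z :=
    (Complex.reCLM.prod Complex.imCLM).hasFDerivAt
  have hA := Complex.ofRealCLM.hasFDerivAt.comp z (ha.hasFDerivAt.comp z hE)
  have hB := Complex.ofRealCLM.hasFDerivAt.comp z (hb.hasFDerivAt.comp z hE)
  have hF : HasFDerivAt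
      (fun w : ℂ => (a (w.re, w.im) : ℂ) + Complex.I * (b (w.re, w.im) : ℂ)) _ z :=
    hA.add (hB.const_mul Complex.I)
  rw [differentiableAt_complex_iff_differentiableAt_real]
  refine ⟨hF.differentiableAt, ?_⟩
  simp only [pd1, pd2] at h1 h2
  rw [hF.fderiv]
  simp [h1, h2, mul_add, ← mul_assoc]
  ring

theorem stmt8 (Ω : Set (ℝ × ℝ)) (hΩ : IsOpen Ω) (lam : ℝ)
    (ψ : ℝ × ℝ → ℝ) (p : ℝ × ℝ → ℝ)
    (hψ : ContDiffOn ℝ (⊤ : ℕ∞) ψ Ω) (hp : ContDiffOn ℝ (⊤ : ℕ∞) p Ω)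
    (u : ℝ × ℝ → ℝ × ℝ) (hu : u = fun x => (pd2 ψ x, - pd1 ψ x))
    (heq : ∀ x ∈ Ω,
      lap (fun y => (u y).1) x + lam * (u x).1 = pd1 p x ∧
      lap (fun y => (u y).2) x + lam * (u x).2 = pd2 p x)
    (h : ℝ × ℝ → ℝ) (hh : h = fun x => lap ψ x + lam * ψ x) :
    (∀ x ∈ Ω, pd1 p x = pd2 h x ∧ pd2 p x = - pd1 h x) ∧
    ∀ z : ℂ, (z.re, z.im) ∈ Ω →
      DifferentiableAt ℂ
        (fun w : ℂ => (p (w.re, w.im) : ℂ) + Complex.I * (h (w.re, w.im) : ℂ)) z := by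
  subst hu hh
  have hCR : ∀ x ∈ Ω, pd1 p x = pd2 (fun x => lap ψ x + lam * ψ x) x ∧
      pd2 p x = - pd1 (fun x => lap ψ x + lam * ψ x) x := by
    intro x hx
    obtain ⟨e1, e2⟩ := heq x hx
    have c1 := lap_pd1 hΩ hψ lam hx
    have c2 := lap_pd2 hΩ hψ lam hx
    have n := lap_neg (pd1 ψ) x
    dsimp only at e1 e2
    refine ⟨e1.symm.trans c2, ?_⟩
    rw [← c1, ← e2, n]
    ring
  refine ⟨hCR, fun z hz => ?_⟩
  exact differentiableAt_complex_of_pd (differentiableAt_of_smoothOn hΩ hp hz)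
    (differentiableAt_of_smoothOn hΩ
      ((contDiffOn_lap hΩ hψ).add (contDiffOn_const.mul hψ)) hz)
    (hCR _ hz).1 (hCR _ hz).2
end

section
/- Let Ω ⊆ ℝ² be open and connected, let λ ∈ ℝ, let ψ : ℝ² → ℝ be smooth on Ω, set u = (∂₂ψ, −∂₁ψ), assume Δu + λu = 0 on Ω (componentwise), and let c ∈ ℝ be such that Δψ + λψ = c on Ω. Then the convective term is a gradient on Ω: for i = 1, 2 and all x ∈ Ω, (u₁ ∂₁uᵢ + u₂ ∂₂uᵢ)(x) = ∂ᵢ( |u|²/2 + λψ²/2 − cψ )(x). -/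
/-! Write `ψᵢ = ∂ᵢψ` and `ψᵢⱼ = ∂ᵢ∂ⱼψ`. Since `u = (ψ₂, -ψ₁)`, the first component of the convective
term is `ψ₂ ψ₁₂ - ψ₁ ψ₂₂`, while the product rule gives `ψ₂ ψ₁₂ + ψ₁ (ψ₁₁ + lam ψ - c)` for the first
partial of the candidate potential; the two agree because `ψ₁₁ + ψ₂₂ + lam ψ = c`. The second
component is the same computation with the indices exchanged. The identity is thus pointwise: it
rests on the relation `Δψ + lam ψ = c` at the point and on the differentiability there of `ψ` and
its first partials; mixed partials never have to be interchanged. -/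

open MeasureTheory

/-- The differential of the candidate potential, where `a` and `b` stand for the first and
second partials of `ψ`. -/
theorem fderiv_potential {a b ψ : ℝ × ℝ → ℝ} {x : ℝ × ℝ} (lam c : ℝ)
    (ha : DifferentiableAt ℝ a x) (hb : DifferentiableAt ℝ b x) (hψ : DifferentiableAt ℝ ψ x)
    (v : ℝ × ℝ) :
    fderiv ℝ (fun y => ((b y) ^ 2 + (-a y) ^ 2) / 2 + lam * (ψ y) ^ 2 / 2 - c * ψ y) x v =
      b x * fderiv ℝ b x v + a x * fderiv ℝ a x v + lam * ψ x * fderiv ℝ ψ x v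
        - c * fderiv ℝ ψ x v := by
  have h := (((((hb.hasFDerivAt.pow 2).add (ha.hasFDerivAt.neg.pow 2)).mul_const (2⁻¹ : ℝ)).add
    (((hψ.hasFDerivAt.pow 2).const_mul lam).mul_const (2⁻¹ : ℝ))).sub
    (hψ.hasFDerivAt.const_mul c))
  have h' : HasFDerivAt
      (fun y => ((b y) ^ 2 + (-a y) ^ 2) / 2 + lam * (ψ y) ^ 2 / 2 - c * ψ y) _ x := h
  rw [h'.fderiv]
  simp
  ring

theorem differentiableAt_fderiv_apply {ψ : ℝ × ℝ → ℝ} {x : ℝ × ℝ} (h : ContDiffAt ℝ 2 ψ x)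
    (v : ℝ × ℝ) : DifferentiableAt ℝ (fun y => fderiv ℝ ψ y v) x :=
  ((h.fderiv_right (m := 1) (by norm_num)).differentiableAt (by norm_num)).clm_apply
    (differentiableAt_const v)

theorem stmt11 (Ω : Set (ℝ × ℝ)) (hΩ : IsOpen Ω) (hconn : IsConnected Ω) (lam : ℝ)
    (ψ : ℝ × ℝ → ℝ) (hψ : ContDiffOn ℝ (⊤ : ℕ∞) ψ Ω)
    (u : ℝ × ℝ → ℝ × ℝ) (hu : u = fun x => (pd2 ψ x, - pd1 ψ x))
    (heq : ∀ x ∈ Ω,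
      lap (fun y => (u y).1) x + lam * (u x).1 = 0 ∧
      lap (fun y => (u y).2) x + lam * (u x).2 = 0)
    (c : ℝ) (hc : ∀ x ∈ Ω, lap ψ x + lam * ψ x = c) :
    ∀ x ∈ Ω,
      ((u x).1 * pd1 (fun y => (u y).1) x + (u x).2 * pd2 (fun y => (u y).1) x =
        pd1 (fun y => ((u y).1 ^ 2 + (u y).2 ^ 2) / 2 + lam * (ψ y) ^ 2 / 2 - c * ψ y) x) ∧
      ((u x).1 * pd1 (fun y => (u y).2) x + (u x).2 * pd2 (fun y => (u y).2) x =
        pd2 (fun y => ((u y).1 ^ 2 + (u y).2 ^ 2) / 2 + lam * (ψ y) ^ 2 / 2 - c * ψ y) x) := by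
  intro x hx
  subst hu
  have h2 : ContDiffAt ℝ 2 ψ x :=
    (hψ.contDiffAt (hΩ.mem_nhds hx)).of_le (WithTop.coe_le_coe.2 (le_top : (2 : ℕ∞) ≤ ⊤))
  have ha : DifferentiableAt ℝ (pd1 ψ) x := differentiableAt_fderiv_apply h2 _
  have hb : DifferentiableAt ℝ (pd2 ψ) x := differentiableAt_fderiv_apply h2 _
  have hp := fderiv_potential lam c ha hb (h2.differentiableAt (by norm_num))
  have hcx : pd1 (pd1 ψ) x + pd2 (pd2 ψ) x + lam * ψ x = c := hc x hx
  have hn (v : ℝ × ℝ) : fderiv ℝ (fun y => -pd1 ψ y) x v = -fderiv ℝ (pd1 ψ) x v := by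
    rw [fderiv_fun_neg]
    rfl
  constructor
  · change pd2 ψ x * pd1 (pd2 ψ) x + -pd1 ψ x * pd2 (pd2 ψ) x = fderiv ℝ _ x (1, 0)
    rw [hp]
    change _ = pd2 ψ x * pd1 (pd2 ψ) x + pd1 ψ x * pd1 (pd1 ψ) x + lam * ψ x * pd1 ψ x
      - c * pd1 ψ x
    linear_combination (-pd1 ψ x) * hcx
  · change pd2 ψ x * fderiv ℝ (fun y => -pd1 ψ y) x (1, 0)
      + -pd1 ψ x * fderiv ℝ (fun y => -pd1 ψ y) x (0, 1) = fderiv ℝ _ x (0, 1)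
    rw [hp, hn, hn]
    change pd2 ψ x * -pd1 (pd1 ψ) x + -pd1 ψ x * -pd2 (pd1 ψ) x =
      pd2 ψ x * pd2 (pd2 ψ) x + pd1 ψ x * pd2 (pd1 ψ) x + lam * ψ x * pd2 ψ x - c * pd2 ψ x
    linear_combination (-pd2 ψ x) * hcx
end
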